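/- arXiv:2411.06247 — 3 statements merged into one kernel-verified Lean document; each statement's English description precedes it below -/
import Mathlib

section
/- Let G be a double star (a tree of diameter 3) with ℓ ≥ 1 leaves attached to one center and r ≥ 1 leaves attached to the other center, so that G has n = ℓ + r + 2 vertices. Then T_mix(G) = 4ℓr/(2(n−1)) + 5/2. -/
/-!
Hitting times to a fixed target `v` are the only nonnegative solution of the first-step
equations `h v = 0`, `h u = 1 + ∑ w, step u w * h w` (`hit_eq_of_first_step`): telescoping
`g = h - K h`, where `K` is the killed walk and `g` the indicator of `{v}ᶜ`, bounds the series
`∑ K^t g` by `h`; its terms tend to `0`, and since `h ≤ C g` so does the remainder `K^T h`.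

In the double star every vertex has one of four types (left leaf, left center, right center,
right leaf), the position `0, 1, 2, 3` along the spine of the type's representative, and
adjacency depends only on types. So for `w ≠ v`, the hitting time `H(w, v)` depends only on the
types of `w` and `v`: it is an entry of an explicit `4 × 4` table `hitTable`, verified through
the first-step equations. With `m = ℓ + r + 1` edges, the mixing time from each leaf is
`4ℓr/(2m) + 5/2` and from each center `4ℓr/(2m) + 3/2`.
-/

open scoped Classical

namespace RWMix

/-- The degree of a vertex. -/
noncomputable def deg {W : Type*} (G : SimpleGraph W) (v : W) : ℕ :=
  Nat.card {w // G.Adj v w}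

/-- The number of edges of a graph. -/
noncomputable def numEdges {W : Type*} (G : SimpleGraph W) : ℕ :=
  Nat.card G.edgeSet

/-- Transition matrix of the simple random walk: from `u` move to each neighbor
with probability `1/deg u`. -/
noncomputable def step {V : Type*} [Fintype V] (G : SimpleGraph V) : Matrix V V ℝ :=
  Matrix.of fun u w => if G.Adj u w then ((deg G u : ℝ))⁻¹ else 0

/-- The walk killed at `v` (rows at `v` are zeroed out). -/
noncomputable def killed {V : Type*} [Fintype V] (G : SimpleGraph V) (v : V) :
    Matrix V V ℝ :=
  Matrix.of fun u w => if u = v then 0 else step G u w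

/-- Expected hitting time `H(u,v)`: the sum over `t ≥ 0` of the probability that the walk
started at `u` has not visited `v` through time `t`.  This equals the expectation of the
first hitting time of `v`, and `hit G u u = 0`. -/
noncomputable def hit {V : Type*} [Fintype V] [DecidableEq V]
    (G : SimpleGraph V) (u v : V) : ℝ :=
  ∑' t : ℕ, ∑ w : V, (killed G v ^ t) u w * (if w = v then (0 : ℝ) else 1)

/-- The stationary distribution: `π v = deg v / (2 |E|)`. -/
noncomputable def statPr {V : Type*} [Fintype V] (G : SimpleGraph V) (v : V) : ℝ :=
  (deg G v : ℝ) / (2 * (numEdges G : ℝ))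

/-- The access time `H(π, v) = ∑_u π_u H(u,v)`. -/
noncomputable def hitPi {V : Type*} [Fintype V] [DecidableEq V]
    (G : SimpleGraph V) (v : V) : ℝ :=
  ∑ u : V, statPr G u * hit G u v

/-- The mixing time from vertex `v`: `H(v,π) = max_w H(w,v) − H(π,v)`. -/
noncomputable def mixFrom {V : Type*} [Fintype V] [DecidableEq V]
    (G : SimpleGraph V) (v : V) : ℝ :=
  (⨆ w : V, hit G w v) - hitPi G v

/-- The (exact) mixing time `T_mix(G) = max_v H(v,π)`. -/
noncomputable def Tmix {V : Type*} [Fintype V] [DecidableEq V]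
    (G : SimpleGraph V) : ℝ :=
  ⨆ v : V, mixFrom G v

/-- Edges of the double broom, on vertex set `Fin (d+1) ⊕ Fin a ⊕ Fin b`:
the spine path `v_0, …, v_d`, extra left leaves attached to `v_1`,
and extra right leaves attached to `v_{d-1}`. -/
def broomRel (d : ℕ) {a b : ℕ} :
    (Fin (d+1) ⊕ Fin a ⊕ Fin b) → (Fin (d+1) ⊕ Fin a ⊕ Fin b) → Prop
  | Sum.inl i, Sum.inl j => (i : ℕ) + 1 = (j : ℕ)
  | Sum.inr (Sum.inl _), Sum.inl j => (j : ℕ) = 1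
  | Sum.inr (Sum.inr _), Sum.inl j => (j : ℕ) = d - 1
  | _, _ => False

/-- The double broom of diameter `d` with `ℓ` left leaves and `r` right leaves:
the diametral path is `v_0, …, v_d` (where `v_0` is one left leaf and `v_d` one right
leaf), together with `ℓ - 1` further pendant leaves at `v_1` and `r - 1` further pendant
leaves at `v_{d-1}`.  It has `d - 1 + ℓ + r` vertices. -/
def doubleBroom (d ℓ r : ℕ) :
    SimpleGraph (Fin (d+1) ⊕ Fin (ℓ-1) ⊕ Fin (r-1)) :=
  SimpleGraph.fromRel (broomRel d)

/-- The balanced double broom `D_{n,d}`, with `ℓ = ⌈(n-d+1)/2⌉` and `r = ⌊(n-d+1)/2⌋`. -/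
def balancedDB (n d : ℕ) :=
  doubleBroom d ((n - d + 2) / 2) ((n - d + 1) / 2)

/-- A leaf is a vertex of degree one. -/
def IsLeaf {W : Type*} (G : SimpleGraph W) (v : W) : Prop := deg G v = 1

/-- `v 0, v 1, …, v s` is a leaf-to-leaf path in `G`. -/
def IsLeafPath {W : Type*} (G : SimpleGraph W) (s : ℕ) (v : Fin (s+1) → W) : Prop :=
  Function.Injective v ∧
  (∀ i : ℕ, ∀ h : i < s, G.Adj (v ⟨i, by omega⟩) (v ⟨i + 1, by omega⟩)) ∧
  IsLeaf G (v 0) ∧ IsLeaf G (v (Fin.last s))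

/-- A caterpillar: every vertex is within distance one of a fixed leaf-to-leaf path
(the spine). -/
def IsCaterpillar {W : Type*} (G : SimpleGraph W) : Prop :=
  ∃ (s : ℕ) (v : Fin (s+1) → W), IsLeafPath G s v ∧ ∀ w, ∃ i, G.dist w (v i) ≤ 1

/-- Move the leaf `y` from its neighbor `a` to the new neighbor `b`:
delete the edge `{a,y}` and add the edge `{b,y}`. -/
def moveLeaf {W : Type*} (G : SimpleGraph W) (a y b : W) : SimpleGraph W :=
  SimpleGraph.fromEdgeSet ((G.edgeSet \ {s(a, y)}) ∪ {s(b, y)})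

/-- A graph is a double broom if it is isomorphic to some `doubleBroom d ℓ r`
with `ℓ, r ≥ 1`. -/
def IsDoubleBroom {W : Type*} (G : SimpleGraph W) : Prop :=
  ∃ (d ℓ r : ℕ), 1 ≤ ℓ ∧ 1 ≤ r ∧ Nonempty (G ≃g doubleBroom d ℓ r)

/-- A near double broom: not a double broom, but there is exactly one leaf whose
removal results in a double broom. -/
def IsNearDoubleBroom {W : Type*} (G : SimpleGraph W) : Prop :=
  ¬ IsDoubleBroom G ∧
    ∃! x : W, IsLeaf G x ∧ IsDoubleBroom (G.induce {y | y ≠ x})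

/-- `w` belongs to the set `V_k`: either `w = v k`, or `w` is a vertex off the spine
adjacent to `v k`. -/
def inVk {W : Type*} {d : ℕ} (G : SimpleGraph W) (v : Fin (d+1) → W)
    (k : Fin (d+1)) (w : W) : Prop :=
  w = v k ∨ ((∀ m, w ≠ v m) ∧ G.Adj (v k) w)


open Finset Filter Topology

/-! ### Hitting times from first-step equations -/

lemma killed_pow_nonneg {V : Type*} [Fintype V] [DecidableEq V] (G : SimpleGraph V) (v : V)
    (t : ℕ) (u w : V) : 0 ≤ (killed G v ^ t) u w := by
  induction t generalizing u w with
  | zero =>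
    rw [pow_zero, Matrix.one_apply]
    split_ifs <;> norm_num
  | succ t ih =>
    rw [pow_succ, Matrix.mul_apply]
    refine sum_nonneg fun x _ => mul_nonneg (ih u x) ?_
    simp only [killed, step, Matrix.of_apply]
    split_ifs <;> positivity

/-- A nonnegative solution of the first-step equations is the hitting time. No connectivity
assumption is needed: the existence of a finite solution forces the walk to reach `v`. -/
lemma hit_eq_of_first_step {V : Type*} [Fintype V] [DecidableEq V] (G : SimpleGraph V) (v : V)
    (h : V → ℝ) (h0 : ∀ u, 0 ≤ h u) (hv : h v = 0)
    (hs : ∀ u, u ≠ v → h u = 1 + ∑ w, step G u w * h w) (u : V) :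
    hit G u v = h u := by
  set K := killed G v with hK
  set g : V → ℝ := fun w => if w = v then (0 : ℝ) else 1 with hg
  have hKh : ∀ x, g x = h x - ∑ w, K x w * h w := by
    intro x
    by_cases hx : x = v
    · simp [hg, hK, killed, hx, hv]
    · simp only [hg, hK, killed, hx, Matrix.of_apply, if_false]
      rw [hs x hx]
      ring
  have hterm : ∀ t, ∑ w, (K ^ t) u w * g w
      = ∑ w, (K ^ t) u w * h w - ∑ w, (K ^ (t + 1)) u w * h w := by
    intro t
    have e : ∑ w, (K ^ (t + 1)) u w * h w = ∑ x, (K ^ t) u x * ∑ w, K x w * h w := by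
      simp only [pow_succ, Matrix.mul_apply, sum_mul, mul_sum]
      rw [sum_comm]
      refine sum_congr rfl fun x _ => sum_congr rfl fun w _ => by ring
    rw [e, ← sum_sub_distrib]
    refine sum_congr rfl fun x _ => ?_
    rw [hKh x]
    ring
  have hpart : ∀ T, ∑ t ∈ range T, ∑ w, (K ^ t) u w * g w
      = h u - ∑ w, (K ^ T) u w * h w := by
    intro T
    simp only [hterm]
    rw [sum_range_sub']
    simp [Matrix.one_apply]
  have hgn : ∀ w, 0 ≤ g w := by
    intro w
    simp only [hg]
    split_ifs <;> norm_num
  have hKg : ∀ t, 0 ≤ ∑ w, (K ^ t) u w * g w := fun t =>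
    sum_nonneg fun w _ => mul_nonneg (killed_pow_nonneg G v t u w) (hgn w)
  have hKhn : ∀ t, 0 ≤ ∑ w, (K ^ t) u w * h w := fun t =>
    sum_nonneg fun w _ => mul_nonneg (killed_pow_nonneg G v t u w) (h0 w)
  have hsum : Summable fun t => ∑ w, (K ^ t) u w * g w :=
    summable_of_sum_range_le (c := h u) hKg fun T => by
      rw [hpart]
      linarith [hKhn T]
  have hlim := hsum.tendsto_atTop_zero
  have hC : ∀ w, h w ≤ (∑ x, h x) * g w := by
    intro w
    by_cases hw : w = v
    · simp [hg, hw, hv]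
    · simp only [hg, hw, if_false, mul_one]
      exact single_le_sum (f := h) (fun x _ => h0 x) (mem_univ w)
  have hrem : Tendsto (fun T => ∑ w, (K ^ T) u w * h w) atTop (𝓝 0) := by
    refine squeeze_zero hKhn (fun T => ?_)
      (by simpa using hlim.const_mul (∑ x, h x))
    rw [mul_sum]
    refine sum_le_sum fun w _ => ?_
    calc (K ^ T) u w * h w ≤ (K ^ T) u w * ((∑ x, h x) * g w) :=
          mul_le_mul_of_nonneg_left (hC w) (killed_pow_nonneg G v T u w)
      _ = _ := by ring
  have h1 := hsum.hasSum.tendsto_sum_nat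
  simp only [hpart] at h1
  have h2 : Tendsto (fun T => h u - ∑ w, (K ^ T) u w * h w) atTop (𝓝 (h u)) := by
    simpa using hrem.const_sub (h u)
  exact tendsto_nhds_unique h1 h2

lemma ciSup_eq_of_attained {V : Type*} [Finite V] (f : V → ℝ) (M : ℝ) (hle : ∀ w, f w ≤ M)
    (w₀ : V) (hw : f w₀ = M) : ⨆ w, f w = M := by
  have : Nonempty V := ⟨w₀⟩
  refine le_antisymm (ciSup_le hle) ?_
  rw [← hw]
  exact le_ciSup (Set.finite_range f).bddAbove w₀

/-! ### Vertex types in the double star -/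

/-- The type of a vertex of the double star: `0` for left leaves, `1` and `2` for the left and
right centers, `3` for right leaves. -/
def vtype {a b : ℕ} : Fin (3+1) ⊕ Fin a ⊕ Fin b → Fin 4
  | Sum.inl i => i
  | Sum.inr (Sum.inl _) => 0
  | Sum.inr (Sum.inr _) => 3

/-- Adjacency matrix of the path `0 - 1 - 2 - 3` of types. -/
def typeAdj : Fin 4 → Fin 4 → ℝ :=
  ![![0, 1, 0, 0], ![1, 0, 1, 0], ![0, 1, 0, 1], ![0, 0, 1, 0]]

/-- The number of vertices of each type. -/
def typeCount (ℓ r : ℝ) : Fin 4 → ℝ := ![ℓ, 1, 1, r]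

/-- The degree of a vertex of each type. -/
def typeDeg (ℓ r : ℝ) : Fin 4 → ℝ := ![1, ℓ + 1, r + 1, 1]

/-- `hitTable ℓ r j i` is the hitting time of a vertex of type `j` from a different vertex of
type `i`. The entries `(1, 1)` and `(2, 2)` are vacuous, as there is one center of each type. -/
def hitTable (ℓ r : ℝ) : Fin 4 → Fin 4 → ℝ :=
  ![![2 * (ℓ + r + 1), 2 * (ℓ + r + 1) - 1, 2 * (ℓ + r + 1) + 2 * r,
      2 * (ℓ + r + 1) + 2 * r + 1],
    ![1, 0, 2 * r + 1, 2 * r + 2],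
    ![2 * ℓ + 2, 2 * ℓ + 1, 0, 1],
    ![2 * (ℓ + r + 1) + 2 * ℓ + 1, 2 * (ℓ + r + 1) + 2 * ℓ, 2 * (ℓ + r + 1) - 1,
      2 * (ℓ + r + 1)]]

lemma adj_ite (ℓ r : ℕ) (u w : Fin (3+1) ⊕ Fin (ℓ-1) ⊕ Fin (r-1)) :
    (if (doubleBroom 3 ℓ r).Adj u w then (1 : ℝ) else 0) = typeAdj (vtype u) (vtype w) := by
  simp only [doubleBroom, SimpleGraph.fromRel_adj]
  rcases u with u | u | u <;> rcases w with w | w | w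
  · fin_cases u <;> fin_cases w <;> simp [broomRel, typeAdj, vtype]
  · fin_cases u <;> simp [broomRel, typeAdj, vtype]
  · fin_cases u <;> simp [broomRel, typeAdj, vtype]
  · fin_cases w <;> simp [broomRel, typeAdj, vtype]
  · simp [broomRel, typeAdj, vtype]
  · simp [broomRel, typeAdj, vtype]
  · fin_cases w <;> simp [broomRel, typeAdj, vtype]
  · simp [broomRel, typeAdj, vtype]
  · simp [broomRel, typeAdj, vtype]

/-- Summation over vertices of a function of the type. -/
lemma sum_vtype (ℓ r : ℕ) (hl : 1 ≤ ℓ) (hr : 1 ≤ r) (F : Fin 4 → ℝ) :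
    ∑ w : Fin (3+1) ⊕ Fin (ℓ-1) ⊕ Fin (r-1), F (vtype w) = ∑ i, typeCount ℓ r i * F i := by
  simp only [Fintype.sum_sum_type, vtype, Fin.sum_univ_four, typeCount, sum_const, card_univ,
    Fintype.card_fin, nsmul_eq_mul, Nat.cast_sub hl, Nat.cast_sub hr]
  have h4 : ∑ x : Fin (3+1), F x = F 0 + F 1 + F 2 + F 3 := Fin.sum_univ_four F
  rw [h4]
  simp
  ring

lemma sum_vtype_ne (ℓ r : ℕ) (hl : 1 ≤ ℓ) (hr : 1 ≤ r)
    (v : Fin (3+1) ⊕ Fin (ℓ-1) ⊕ Fin (r-1)) (A F : Fin 4 → ℝ) :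
    ∑ w, A (vtype w) * (if w = v then 0 else F (vtype w))
      = ∑ i, typeCount ℓ r i * (A i * F i) - A (vtype v) * F (vtype v) := by
  rw [← sum_vtype ℓ r hl hr (fun i => A i * F i), eq_sub_iff_add_eq]
  rw [← sum_erase_add _ _ (mem_univ v), ← sum_erase_add _ _ (mem_univ v)]
  rw [if_pos rfl, mul_zero, add_zero]
  congr 1
  refine sum_congr rfl fun w hw => ?_
  rw [if_neg (ne_of_mem_erase hw)]

lemma deg_doubleBroom (ℓ r : ℕ) (hl : 1 ≤ ℓ) (hr : 1 ≤ r)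
    (u : Fin (3+1) ⊕ Fin (ℓ-1) ⊕ Fin (r-1)) :
    (deg (doubleBroom 3 ℓ r) u : ℝ) = typeDeg ℓ r (vtype u) := by
  have h1 : (deg (doubleBroom 3 ℓ r) u : ℝ)
      = ∑ w, if (doubleBroom 3 ℓ r).Adj u w then (1 : ℝ) else 0 := by
    rw [deg, Nat.card_eq_fintype_card, Fintype.card_subtype, sum_boole]
  rw [h1]
  simp only [adj_ite]
  rw [sum_vtype ℓ r hl hr (fun i => typeAdj (vtype u) i)]
  generalize vtype u = i
  fin_cases i <;> simp [Fin.sum_univ_four, typeAdj, typeCount, typeDeg, add_comm]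

lemma two_numEdges (ℓ r : ℕ) (hl : 1 ≤ ℓ) (hr : 1 ≤ r) :
    2 * (numEdges (doubleBroom 3 ℓ r) : ℝ) = 2 * (ℓ + r + 1) := by
  have h1 : numEdges (doubleBroom 3 ℓ r) = #(doubleBroom 3 ℓ r).edgeFinset := by
    rw [numEdges, Nat.card_eq_fintype_card, SimpleGraph.edgeFinset_card]
  have h2 := (doubleBroom 3 ℓ r).sum_degrees_eq_twice_card_edges
  rw [← h1] at h2
  have h3 : ∀ u, (doubleBroom 3 ℓ r).degree u = deg (doubleBroom 3 ℓ r) u := by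
    intro u
    rw [deg, Nat.card_eq_fintype_card, ← SimpleGraph.card_neighborSet_eq_degree]
    exact Fintype.card_congr (Equiv.refl _)
  simp only [h3] at h2
  have h4 := congrArg (Nat.cast (R := ℝ)) h2
  push_cast at h4
  rw [← h4]
  simp only [deg_doubleBroom ℓ r hl hr]
  rw [sum_vtype ℓ r hl hr (typeDeg ℓ r)]
  simp [Fin.sum_univ_four, typeCount, typeDeg]
  ring

/-! ### Hitting and mixing times of the double star -/

lemma hit_doubleBroom (ℓ r : ℕ) (hl : 1 ≤ ℓ) (hr : 1 ≤ r)
    (u v : Fin (3+1) ⊕ Fin (ℓ-1) ⊕ Fin (r-1)) :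
    hit (doubleBroom 3 ℓ r) u v = if u = v then 0 else hitTable ℓ r (vtype v) (vtype u) := by
  have hl' : (1 : ℝ) ≤ ℓ := by exact_mod_cast hl
  have hr' : (1 : ℝ) ≤ r := by exact_mod_cast hr
  refine hit_eq_of_first_step _ v
    (fun u => if u = v then 0 else hitTable ℓ r (vtype v) (vtype u)) ?_ (by simp) ?_ u
  · intro w
    split_ifs
    · rfl
    · generalize vtype w = i
      generalize vtype v = j
      fin_cases i <;> fin_cases j <;> simp [hitTable] <;> linarith
  · intro w hw
    have hstep : ∀ x, step (doubleBroom 3 ℓ r) w x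
        = (typeDeg ℓ r (vtype w))⁻¹ * typeAdj (vtype w) (vtype x) := by
      intro x
      rw [← adj_ite, ← deg_doubleBroom ℓ r hl hr, step, Matrix.of_apply, mul_ite, mul_one,
        mul_zero]
    simp only [hstep, if_neg hw]
    rw [sum_vtype_ne ℓ r hl hr v
      (fun i => (typeDeg ℓ r (vtype w))⁻¹ * typeAdj (vtype w) i) (hitTable ℓ r (vtype v))]
    -- Two distinct vertices cannot both be the left center, nor both the right center.
    have hc : ¬ (vtype w = 1 ∧ vtype v = 1) ∧ ¬ (vtype w = 2 ∧ vtype v = 2) := by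
      constructor <;>
      · rintro ⟨h1, h2⟩
        apply hw
        rcases w with w | w | w <;> rcases v with v | v | v <;>
          simp_all [vtype]
    generalize vtype w = i at *
    generalize vtype v = j at *
    have hl1 : (ℓ : ℝ) + 1 ≠ 0 := by positivity
    have hr1 : (r : ℝ) + 1 ≠ 0 := by positivity
    fin_cases i <;> fin_cases j <;>
      simp [Fin.sum_univ_four, hitTable, typeAdj, typeCount, typeDeg] at hc ⊢ <;>
      field_simp <;> ring

/-- The largest hitting time of a vertex of each type, attained from a leaf on the other side. -/
def maxTable (ℓ r : ℝ) : Fin 4 → ℝ :=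
  ![2 * (ℓ + r + 1) + 2 * r + 1, 2 * r + 2, 2 * ℓ + 2, 2 * (ℓ + r + 1) + 2 * ℓ + 1]

lemma iSup_hit (ℓ r : ℕ) (hl : 1 ≤ ℓ) (hr : 1 ≤ r)
    (v : Fin (3+1) ⊕ Fin (ℓ-1) ⊕ Fin (r-1)) :
    ⨆ w, hit (doubleBroom 3 ℓ r) w v = maxTable ℓ r (vtype v) := by
  have hl' : (1 : ℝ) ≤ ℓ := by exact_mod_cast hl
  have hr' : (1 : ℝ) ≤ r := by exact_mod_cast hr
  simp only [hit_doubleBroom ℓ r hl hr]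
  have hne : ∀ i : Fin 4, vtype v ≠ i → (Sum.inl i : Fin (3+1) ⊕ Fin (ℓ-1) ⊕ Fin (r-1)) ≠ v := by
    rintro i hi rfl
    exact hi rfl
  refine ciSup_eq_of_attained _ _ (fun w => ?_)
    (Sum.inl (if vtype v = 0 ∨ vtype v = 1 then 3 else 0)) ?_
  · split_ifs <;>
    · generalize vtype w = i
      generalize vtype v = j
      fin_cases i <;> fin_cases j <;> simp [hitTable, maxTable] <;> linarith
  · rw [if_neg (hne _ (by generalize vtype v = j; fin_cases j <;> simp))]
    change hitTable ℓ r (vtype v) (if vtype v = 0 ∨ vtype v = 1 then 3 else 0) = _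
    generalize vtype v = j
    fin_cases j <;> simp [hitTable, maxTable]

/-- The mixing time from a vertex of each type. -/
noncomputable def mixTable (ℓ r : ℝ) : Fin 4 → ℝ :=
  ![4 * ℓ * r / (2 * (ℓ + r + 1)) + 5 / 2, 4 * ℓ * r / (2 * (ℓ + r + 1)) + 3 / 2,
    4 * ℓ * r / (2 * (ℓ + r + 1)) + 3 / 2, 4 * ℓ * r / (2 * (ℓ + r + 1)) + 5 / 2]

lemma mixFrom_doubleBroom (ℓ r : ℕ) (hl : 1 ≤ ℓ) (hr : 1 ≤ r)
    (v : Fin (3+1) ⊕ Fin (ℓ-1) ⊕ Fin (r-1)) :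
    mixFrom (doubleBroom 3 ℓ r) v = mixTable ℓ r (vtype v) := by
  rw [mixFrom, iSup_hit ℓ r hl hr, hitPi]
  simp only [statPr, two_numEdges ℓ r hl hr, deg_doubleBroom ℓ r hl hr, hit_doubleBroom ℓ r hl hr]
  rw [sum_vtype_ne ℓ r hl hr v (fun i => typeDeg ℓ r i / (2 * (ℓ + r + 1)))
    (hitTable ℓ r (vtype v))]
  generalize vtype v = j
  have hm : (ℓ : ℝ) + r + 1 ≠ 0 := by positivity
  fin_cases j <;>
    simp [Fin.sum_univ_four, hitTable, maxTable, mixTable, typeCount, typeDeg] <;>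
    field_simp <;> ring

/-- the mixing time of a double star (diameter-3 double broom) with
`ℓ` and `r` leaves and `n = ℓ + r + 2` vertices is `4ℓr/(2(n-1)) + 5/2`. -/
theorem stmt7 (ℓ r n : ℕ) (hl : 1 ≤ ℓ) (hr : 1 ≤ r) (hn : n = ℓ + r + 2) :
    Tmix (doubleBroom 3 ℓ r) =
      4 * (ℓ : ℝ) * (r : ℝ) / (2 * ((n : ℝ) - 1)) + 5 / 2 := by
  have hn' : (n : ℝ) - 1 = ℓ + r + 1 := by
    rw [hn]
    push_cast
    ring
  rw [hn', Tmix]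
  refine ciSup_eq_of_attained _ _ (fun v => ?_) (Sum.inl 0) ?_
  · rw [mixFrom_doubleBroom ℓ r hl hr]
    generalize vtype v = j
    fin_cases j <;> simp [mixTable] <;> norm_num
  · rw [mixFrom_doubleBroom ℓ r hl hr]
    simp [mixTable, vtype]

end RWMix
end

section
/- For n ≥ 4, the balanced double star D_{n,3} (the balanced double broom of diameter 3) satisfies T_mix(D_{n,3}) = n/2 + 1 + 1/(2(n−1)) when n is even, and T_mix(D_{n,3}) = n/2 + 1 when n is odd. -/
/-!
The mixing time is computed exactly, for every double star, from explicit hitting times.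

A nonnegative function `h` with `h v = 0` and `h u = 1 + ∑ w, P u w * h w` for `u ≠ v` equals
`hit G · v` (`hit_eq_of_harmonic`): iterating the recursion gives
`h = ∑_{t < N} Q ^ t 1 + Q ^ N h` for the killed kernel `Q`, the series converges since it is
bounded by `h`, so its terms tend to `0`, and so does `Q ^ N h`, as `h` is bounded by a
multiple of `1` off `v`.

In a double star with `a + 1` and `b + 1` leaves every vertex has one of four kinds (left leaf,
left centre, right centre, right leaf), and adjacency only depends on the kinds. Hence the
hitting time between distinct vertices is a function `G4` of their kinds, and sums over
vertices reduce to weighted sums over `Fin 4`. Hitting times to a vertex are maximal from the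
leaves on the other side, so `mixFrom` is an explicit rational function of `a`, `b` for each kind.
The balanced case is `a = b` or `a = b + 1`, where the maximum is attained at the left leaves.
-/

open scoped Classical

namespace RWMix

/-! ### Hitting times as solutions of the one-step recursion -/

/-- First-step analysis determines the hitting times of `v`. -/
theorem hit_eq_of_harmonic {V : Type*} [Fintype V] [DecidableEq V] (G : SimpleGraph V) (v : V)
    (h : V → ℝ) (h_nonneg : ∀ u, 0 ≤ h u) (hv : h v = 0)
    (hrec : ∀ u, u ≠ v → h u = 1 + ∑ w, step G u w * h w) (u : V) :
    hit G u v = h u := by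
  set Q := killed G v with hQ
  set e : V → ℝ := fun w => if w = v then 0 else 1 with he
  have Q_nonneg : ∀ u w, 0 ≤ Q u w := by
    intro u w
    simp only [hQ, killed, step, Matrix.of_apply]
    split_ifs <;> positivity
  have pow_nonneg' : ∀ t u w, 0 ≤ (Q ^ t) u w := by
    intro t
    induction t with
    | zero => intro u w; rw [pow_zero, Matrix.one_apply]; split_ifs <;> norm_num
    | succ t ih =>
      intro u w
      rw [pow_succ, Matrix.mul_apply]
      exact Finset.sum_nonneg fun x _ => mul_nonneg (ih u x) (Q_nonneg x w)
  have hfix : h = e + Q.mulVec h := by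
    funext u
    by_cases hu : u = v
    · subst hu
      simp [he, hQ, killed, Matrix.mulVec, dotProduct, hv]
    · rw [hrec u hu]
      simp [he, hQ, killed, Matrix.mulVec, dotProduct, hu]
  have hiter : ∀ N : ℕ, ∀ u, h u =
      ∑ t ∈ Finset.range N, ((Q ^ t).mulVec e) u + ((Q ^ N).mulVec h) u := by
    intro N
    induction N with
    | zero => intro u; simp
    | succ N ih =>
      intro u
      rw [ih u, Finset.sum_range_succ]
      have : (Q ^ N).mulVec h = (Q ^ N).mulVec e + (Q ^ (N + 1)).mulVec h := by
        conv_lhs => rw [hfix]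
        rw [Matrix.mulVec_add, Matrix.mulVec_mulVec, pow_succ]
      rw [this, Pi.add_apply]
      ring
  have e_nonneg : ∀ w, 0 ≤ e w := by
    intro w; simp only [he]; split_ifs <;> norm_num
  have term_nonneg : ∀ (f : V → ℝ), (∀ w, 0 ≤ f w) → ∀ t, 0 ≤ ((Q ^ t).mulVec f) u :=
    fun f hf t => Finset.sum_nonneg fun w _ => mul_nonneg (pow_nonneg' t u w) (hf w)
  have hsum : Summable fun t => ((Q ^ t).mulVec e) u := by
    refine summable_of_sum_range_le (c := h u) (term_nonneg e e_nonneg) fun N => ?_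
    have := hiter N u
    have := term_nonneg h h_nonneg N
    linarith
  -- The remainder vanishes because `h ≤ C • e`.
  set C := ∑ w, h w with hC
  have hle : ∀ w, h w ≤ C * e w := by
    intro w
    by_cases hw : w = v
    · subst hw; simp [he, hv]
    · simp only [he, hw, if_false, mul_one]
      exact Finset.single_le_sum (fun x _ => h_nonneg x) (Finset.mem_univ w)
  have hrem : Filter.Tendsto (fun N => ((Q ^ N).mulVec h) u) Filter.atTop (nhds 0) := by
    have h0 : Filter.Tendsto (fun N => C * ((Q ^ N).mulVec e) u) Filter.atTop (nhds 0) := by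
      simpa using hsum.tendsto_atTop_zero.const_mul C
    refine squeeze_zero (term_nonneg h h_nonneg) (fun N => ?_) h0
    simp only [Matrix.mulVec, dotProduct, Finset.mul_sum]
    refine Finset.sum_le_sum fun w _ => ?_
    calc (Q ^ N) u w * h w ≤ (Q ^ N) u w * (C * e w) :=
          mul_le_mul_of_nonneg_left (hle w) (pow_nonneg' N u w)
      _ = C * ((Q ^ N) u w * e w) := by ring
  have hlim : Filter.Tendsto (fun N => ∑ t ∈ Finset.range N, ((Q ^ t).mulVec e) u)
      Filter.atTop (nhds (h u)) := by
    have : (fun N => ∑ t ∈ Finset.range N, ((Q ^ t).mulVec e) u)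
        = fun N => h u - ((Q ^ N).mulVec h) u := by
      funext N; rw [hiter N u]; ring
    rw [this]
    simpa using hrem.const_sub (h u)
  exact tendsto_nhds_unique hsum.hasSum.tendsto_sum_nat hlim

/-! ### Double stars: kinds of vertices -/

/-- The vertex type of a double star with `a + 1` left and `b + 1` right leaves. -/
abbrev DSV (a b : ℕ) := Fin (3 + 1) ⊕ Fin (a + 1 - 1) ⊕ Fin (b + 1 - 1)

/-- The kind of a vertex of a double star: `0` for left leaves, `1` and `2` for the left and
right centre, `3` for right leaves. -/
def kind {a b : ℕ} : DSV a b → Fin 4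
  | Sum.inl i => i
  | Sum.inr (Sum.inl _) => 0
  | Sum.inr (Sum.inr _) => 3

/-- Adjacency in terms of kinds. -/
def AdjK (i j : Fin 4) : Prop := (i : ℕ) + 1 = j ∨ (j : ℕ) + 1 = i

instance (i j : Fin 4) : Decidable (AdjK i j) := by unfold AdjK; infer_instance

theorem adj_iff {a b : ℕ} (u w : DSV a b) :
    (doubleBroom 3 (a + 1) (b + 1)).Adj u w ↔ AdjK (kind u) (kind w) := by
  unfold doubleBroom
  rw [SimpleGraph.fromRel_adj]
  rcases u with i | i | i <;> rcases w with j | j | j <;>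
    simp only [broomRel, kind, AdjK, ne_eq, Sum.inl.injEq, Sum.inr.injEq, reduceCtorEq,
      not_false_eq_true, true_and, false_or, or_false, Fin.ext_iff, and_false, Fin.val_zero,
      Fin.isValue] <;> (try simp) <;> omega

/-- Every sum of a function of the kind is a weighted sum over the four kinds. -/
theorem sum_kind {a b : ℕ} (f : Fin 4 → ℝ) :
    ∑ w : DSV a b, f (kind w) = (a + 1) * f 0 + f 1 + f 2 + (b + 1) * f 3 := by
  rw [Fintype.sum_sum_type, Fintype.sum_sum_type]
  simp [kind, Fin.sum_univ_four]
  ring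

theorem iSup_kind {a b : ℕ} (F : Fin 4 → ℝ) (M : ℝ) (j : Fin 4) (hle : ∀ i, F i ≤ M)
    (hj : F j = M) : ⨆ v : DSV a b, F (kind v) = M := by
  have : Nonempty (DSV a b) := ⟨Sum.inl 0⟩
  refine le_antisymm (ciSup_le fun v => hle _) ?_
  rw [← hj]
  exact le_ciSup (f := fun v : DSV a b => F (kind v)) (Set.finite_range _).bddAbove (Sum.inl j)

/-- The degree of a vertex of given kind. -/
def D4 (a b : ℕ) : Fin 4 → ℕ := ![1, a + 2, b + 2, 1]

theorem deg_eq {a b : ℕ} (u : DSV a b) :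
    deg (doubleBroom 3 (a + 1) (b + 1)) u = D4 a b (kind u) := by
  have h1 : (deg (doubleBroom 3 (a + 1) (b + 1)) u : ℝ)
      = ∑ w : DSV a b, if AdjK (kind u) (kind w) then (1 : ℝ) else 0 := by
    unfold deg
    rw [Nat.card_eq_fintype_card, Fintype.card_subtype, Finset.card_filter]
    push_cast
    refine Finset.sum_congr rfl fun w _ => ?_
    simp only [adj_iff]
  rw [sum_kind fun j => if AdjK (kind u) j then (1 : ℝ) else 0] at h1
  have h2 : (deg (doubleBroom 3 (a + 1) (b + 1)) u : ℝ) = (D4 a b (kind u) : ℝ) := by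
    rw [h1]
    generalize kind u = i
    fin_cases i <;> simp [AdjK, D4] <;> ring
  exact_mod_cast h2

theorem numEdges_eq (a b : ℕ) :
    (numEdges (doubleBroom 3 (a + 1) (b + 1)) : ℝ) = a + b + 3 := by
  have h := SimpleGraph.sum_degrees_eq_twice_card_edges (doubleBroom 3 (a + 1) (b + 1))
  have hd : ∀ u : DSV a b, (doubleBroom 3 (a + 1) (b + 1)).degree u = D4 a b (kind u) := by
    intro u
    rw [← deg_eq u, deg, Nat.card_eq_fintype_card, ← SimpleGraph.card_neighborSet_eq_degree]
    exact Fintype.card_congr (Equiv.refl _)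
  have he : numEdges (doubleBroom 3 (a + 1) (b + 1))
      = (doubleBroom 3 (a + 1) (b + 1)).edgeFinset.card := by
    rw [numEdges, Nat.card_eq_fintype_card, ← SimpleGraph.edgeFinset_card]
  rw [← he] at h
  have h' : ∑ u : DSV a b, (D4 a b (kind u) : ℝ)
      = 2 * (numEdges (doubleBroom 3 (a + 1) (b + 1)) : ℝ) := by
    rw [Finset.sum_congr rfl fun u _ => hd u] at h
    exact_mod_cast h
  rw [sum_kind fun i => (D4 a b i : ℝ)] at h'
  simp [D4] at h'
  linarith

/-! ### Hitting and mixing times of double stars -/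

/-- `G4 a b i j` is the hitting time of a vertex of kind `i` from a different vertex of
kind `j`. The centres being unique of their kind, the entries `(1, 1)` and `(2, 2)` are set
to `0`. -/
def G4 (a b : ℝ) : Fin 4 → Fin 4 → ℝ :=
  ![![2 * (a + b + 3), 2 * (a + b + 3) - 1, 2 * (b + 1) + 2 * (a + b + 3),
      2 * (b + 1) + 2 * (a + b + 3) + 1],
    ![1, 0, 2 * (b + 1) + 1, 2 * (b + 1) + 2],
    ![2 * (a + 1) + 2, 2 * (a + 1) + 1, 0, 1],
    ![2 * (a + 1) + 2 * (a + b + 3) + 1, 2 * (a + 1) + 2 * (a + b + 3),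
      2 * (a + b + 3) - 1, 2 * (a + b + 3)]]

theorem G4_nonneg (a b : ℕ) (i j : Fin 4) : 0 ≤ G4 a b i j := by
  have ha : (0 : ℝ) ≤ a := Nat.cast_nonneg a
  have hb : (0 : ℝ) ≤ b := Nat.cast_nonneg b
  fin_cases i <;> fin_cases j <;> simp [G4] <;> linarith

theorem eq_of_kind_eq {a b : ℕ} {u v : DSV a b} (h : kind u = kind v)
    (hv : kind v = 1 ∨ kind v = 2) : u = v := by
  rcases u with i | i | i <;> rcases v with j | j | j <;> simp_all [kind] <;>
    rcases hv with hv | hv <;> simp_all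

theorem hit_eq {a b : ℕ} [DecidableEq (DSV a b)] (u v : DSV a b) :
    hit (doubleBroom 3 (a + 1) (b + 1)) u v
      = if u = v then 0 else G4 a b (kind v) (kind u) := by
  have ha : (0 : ℝ) ≤ a := Nat.cast_nonneg a
  have hb : (0 : ℝ) ≤ b := Nat.cast_nonneg b
  refine hit_eq_of_harmonic _ v (fun u => if u = v then 0 else G4 a b (kind v) (kind u))
    (fun u => ?_) (by simp) (fun u hu => ?_) u
  · split_ifs
    · exact le_rfl
    · exact G4_nonneg a b _ _
  -- The sum over `w ≠ v` is the sum over all `w` minus the term of `v`.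
  · have hs : ∀ w, step (doubleBroom 3 (a + 1) (b + 1)) u w
        * (if w = v then 0 else G4 a b (kind v) (kind w))
        = (fun j => (if AdjK (kind u) j then ((D4 a b (kind u) : ℝ))⁻¹ else 0)
            * G4 a b (kind v) j) (kind w)
          - if w = v then (if AdjK (kind u) (kind v) then ((D4 a b (kind u) : ℝ))⁻¹ else 0)
            * G4 a b (kind v) (kind v) else 0 := by
      intro w
      simp only [step, Matrix.of_apply, adj_iff, deg_eq]
      by_cases hw : w = v
      · subst hw; simp
      · simp [hw]
    rw [Finset.sum_congr rfl fun w _ => hs w, Finset.sum_sub_distrib,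
      sum_kind fun j => (if AdjK (kind u) j then ((D4 a b (kind u) : ℝ))⁻¹ else 0)
        * G4 a b (kind v) j,
      Finset.sum_ite_eq' Finset.univ v, if_pos (Finset.mem_univ v), if_neg hu]
    have hk : kind u = kind v → kind v ≠ 1 ∧ kind v ≠ 2 := fun h =>
      ⟨fun h1 => hu (eq_of_kind_eq h (Or.inl h1)), fun h2 => hu (eq_of_kind_eq h (Or.inr h2))⟩
    revert hk
    generalize kind u = i
    generalize kind v = j
    intro hk
    have h1 : (a : ℝ) + 2 ≠ 0 := by positivity
    have h2 : (b : ℝ) + 2 ≠ 0 := by positivity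
    fin_cases i <;> fin_cases j <;> simp [AdjK, D4, G4] at hk ⊢ <;> field_simp <;> ring

/-- `H(v, π)` for `v` of kind `i`, as a weighted sum over kinds. The hitting time of `v` is
maximal from the leaves on the other side; the last summand of the numerator removes the
contribution of `v` itself to `H(π, v)`. -/
noncomputable def M4 (a b : ℕ) (i : Fin 4) : ℝ :=
  G4 a b i (if i = 0 ∨ i = 1 then 3 else 0)
    - ((a + 1) * G4 a b i 0 + (a + 2) * G4 a b i 1 + (b + 2) * G4 a b i 2
        + (b + 1) * G4 a b i 3 - G4 a b i i * D4 a b i) / (2 * (a + b + 3))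

theorem iSup_hit_s8 {a b : ℕ} [DecidableEq (DSV a b)] (v : DSV a b) :
    ⨆ w, hit (doubleBroom 3 (a + 1) (b + 1)) w v
      = G4 a b (kind v) (if kind v = 0 ∨ kind v = 1 then 3 else 0) := by
  have ha : (0 : ℝ) ≤ a := Nat.cast_nonneg a
  have hb : (0 : ℝ) ≤ b := Nat.cast_nonneg b
  have : Nonempty (DSV a b) := ⟨v⟩
  refine le_antisymm (ciSup_le fun w => ?_) ?_
  · rw [hit_eq]
    split_ifs with h1 h2 h2
    · exact G4_nonneg a b _ _
    · exact G4_nonneg a b _ _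
    · revert h2
      generalize kind v = i
      generalize kind w = j
      intro h2
      fin_cases i <;> fin_cases j <;> simp [G4] at h2 ⊢ <;> linarith
    · revert h2
      generalize kind v = i
      generalize kind w = j
      intro h2
      fin_cases i <;> fin_cases j <;> simp [G4] at h2 ⊢ <;> linarith
  · set t : Fin 4 := if kind v = 0 ∨ kind v = 1 then 3 else 0 with ht
    have hne : (Sum.inl t : DSV a b) ≠ v := by
      intro h
      have h' : t = kind v := by rw [← h]; rfl
      rw [← h'] at ht
      revert ht
      generalize t = s
      revert s
      decide
    have hval : hit (doubleBroom 3 (a + 1) (b + 1)) (Sum.inl t : DSV a b) v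
        = G4 a b (kind v) t := by
      rw [hit_eq, if_neg hne]; rfl
    rw [← hval]
    exact le_ciSup (f := fun w => hit (doubleBroom 3 (a + 1) (b + 1)) w v)
      (Set.finite_range _).bddAbove (Sum.inl t)

theorem mixFrom_eq {a b : ℕ} [DecidableEq (DSV a b)] (v : DSV a b) :
    mixFrom (doubleBroom 3 (a + 1) (b + 1)) v = M4 a b (kind v) := by
  unfold mixFrom hitPi M4
  rw [iSup_hit_s8]
  congr 1
  have hs : ∀ u : DSV a b, statPr (doubleBroom 3 (a + 1) (b + 1)) u
      * hit (doubleBroom 3 (a + 1) (b + 1)) u v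
      = (fun j => (D4 a b j : ℝ) / (2 * (a + b + 3)) * G4 a b (kind v) j) (kind u)
        - if u = v then (D4 a b (kind v) : ℝ) / (2 * (a + b + 3))
          * G4 a b (kind v) (kind v) else 0 := by
    intro u
    rw [hit_eq, statPr, deg_eq, numEdges_eq]
    by_cases hu : u = v
    · subst hu; simp
    · simp [hu]
  rw [Finset.sum_congr rfl fun w _ => hs w, Finset.sum_sub_distrib,
    sum_kind fun j => (D4 a b j : ℝ) / (2 * (a + b + 3)) * G4 a b (kind v) j,
    Finset.sum_ite_eq' Finset.univ v, if_pos (Finset.mem_univ v)]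
  generalize 2 * ((a : ℝ) + b + 3) = m
  simp [D4]
  ring

theorem Tmix_eq {a b : ℕ} [DecidableEq (DSV a b)] (M : ℝ) (hle : ∀ i, M4 a b i ≤ M)
    (h0 : M4 a b 0 = M) : Tmix (doubleBroom 3 (a + 1) (b + 1)) = M := by
  unfold Tmix
  rw [← iSup_kind (a := a) (b := b) (M4 a b) M 0 hle h0]
  exact iSup_congr fun v => mixFrom_eq v

/-! ### The balanced case -/

theorem Tmix_balanced {n a b : ℕ} (hl : (n - 3 + 2) / 2 = a + 1) (hr : (n - 3 + 1) / 2 = b + 1)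
    (M : ℝ) (hle : ∀ i, M4 a b i ≤ M) (h0 : M4 a b 0 = M) : Tmix (balancedDB n 3) = M := by
  unfold balancedDB
  generalize (n - 3 + 2) / 2 = l at hl ⊢
  generalize (n - 3 + 1) / 2 = r at hr ⊢
  subst hl hr
  exact Tmix_eq M hle h0

/-- the mixing time of the balanced double star `D_{n,3}` for `n ≥ 4`. -/
theorem stmt8 (n : ℕ) (hn : 4 ≤ n) :
    (Even n → Tmix (balancedDB n 3) = (n : ℝ) / 2 + 1 + 1 / (2 * ((n : ℝ) - 1))) ∧
    (Odd n → Tmix (balancedDB n 3) = (n : ℝ) / 2 + 1) := by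
  constructor
  · rintro ⟨k, rfl⟩
    obtain ⟨c, rfl⟩ : ∃ c, k = c + 2 := ⟨k - 2, by omega⟩
    have hc : (0 : ℝ) ≤ c := Nat.cast_nonneg c
    have h1 : (2 * (c : ℝ) + 3) ≠ 0 := by positivity
    have e : ((c + 2 + (c + 2) : ℕ) : ℝ) / 2 + 1 + 1 / (2 * (((c + 2 + (c + 2) : ℕ) : ℝ) - 1))
        = c + 3 + 1 / (2 * (2 * c + 3)) := by
      have h2 : ((c + 2 + (c + 2) : ℕ) : ℝ) = 2 * c + 4 := by push_cast; ring
      rw [h2, show 2 * (c : ℝ) + 4 - 1 = 2 * c + 3 by ring]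
      ring
    rw [e]
    have hm : (c : ℝ) + c + 3 = 2 * c + 3 := by ring
    have h0 : M4 c c 0 = c + 3 + 1 / (2 * (2 * c + 3)) := by
      simp [M4, G4, D4, hm]
      field_simp
      ring
    refine Tmix_balanced (a := c) (b := c) (by omega) (by omega) _ (fun i => ?_) h0
    rw [← h0]
    fin_cases i <;> simp [M4, G4, D4, hm] <;> rw [← sub_nonneg] <;> field_simp <;> ring_nf <;>
      positivity
  · rintro ⟨k, rfl⟩
    obtain ⟨c, rfl⟩ : ∃ c, k = c + 2 := ⟨k - 2, by omega⟩
    have hc : (0 : ℝ) ≤ c := Nat.cast_nonneg c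
    have h1 : ((c : ℝ) + 2) ≠ 0 := by positivity
    have e : ((2 * (c + 2) + 1 : ℕ) : ℝ) / 2 + 1 = c + 7 / 2 := by push_cast; ring
    rw [e]
    have hm : (c : ℝ) + 1 + c + 3 = 2 * (c + 2) := by ring
    have h0 : M4 (c + 1) c 0 = c + 7 / 2 := by
      simp [M4, G4, D4, hm]
      field_simp
      ring
    refine Tmix_balanced (a := c + 1) (b := c) (by omega) (by omega) _ (fun i => ?_) h0
    rw [← h0]
    fin_cases i <;> simp [M4, G4, D4, hm] <;> rw [← sub_nonneg] <;> field_simp <;> ring_nf <;>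
      positivity

end RWMix
end

section
/- Let G be a tree with n vertices and diameter d that is not a caterpillar, let P = {v_0, v_1, …, v_s} (s ≤ d) be a leaf-to-leaf path in G, and let y be a leaf of G that is neither on P nor adjacent to P. If G* = σ(G,P;y), then: (a) H*(v_i, v_j) = H(v_i, v_j) for all 0 ≤ i, j ≤ s; and (b) for every 0 ≤ j ≤ s, H*(v, v_j) ≤ H(v, v_j) for all vertices v of G, with the strict inequality H*(y, v_j) < H(y, v_j). -/
/-!
On a finite graph in which `z` is reachable from everywhere, `hit G · z` is the unique solution
of the first-step equations `g z = 0`, `g w = 1 + avg_{u ∼ w} g u` for `w ≠ z`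
(`hit_eq_of_isSol`, `exists_isSol`); uniqueness is the maximum principle. It therefore suffices
to exhibit the solution for the modified tree.

Write `b` for the vertex of the path closest to the leaf `y`, let `x` be the old neighbour of `y`,
and let `h` be the hitting time of a path vertex `z` in the original tree. Moving `y` from `x` to
`b` makes the expected time to cross each edge of the geodesic from `x` to `b`, in the direction
of `b`, shorter by two, and affects no other crossing in the direction of `z` except at `y`. Hence the new hitting time should be
`h w - (d(w,b) + d(x,b) - d(w,x))` for `w ≠ y`, and `h b + 1` at `y`. In a tree the Laplacian of
`w ↦ d(w,b) - d(w,x)` vanishes except at `b` and `x`, where it compensates exactly the change of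
degree; this verifies the first-step equations (`isSol_moveLeaf`).

The correction is nonnegative by the triangle inequality, and it vanishes on the path because
every geodesic from `x` to the path goes through `b` (`gate`). The strict inequality at `y` says
`h b + 1 < h y = h x + 1`, and `h b < h x` holds because `b` separates `x ≠ b` from `z`
(`isSol_lt_of_gate`).
-/

open scoped Classical

namespace RWMix

/-! ### The Dirichlet problem for hitting times -/

/-- `g` solves the first-step equations for the hitting time of `z`: it vanishes at `z`, and
elsewhere `∑_{u ∼ w} (g u - g w + 1) = 0`, which is `g w = 1 + (average of g over neighbours)`
with denominators cleared. -/
def IsSol {V : Type*} [Fintype V] (G : SimpleGraph V) (z : V) (g : V → ℝ) : Prop :=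
  g z = 0 ∧ ∀ w, w ≠ z → ∑ u, (if G.Adj w u then g u - g w + 1 else 0) = 0

/-- A rank function witnessing that every vertex can reach `z`: each vertex other than `z` has a
neighbour of smaller rank. -/
def HasRank {V : Type*} (G : SimpleGraph V) (z : V) : Prop :=
  ∃ r : V → ℕ, ∀ w, w ≠ z → ∃ u, G.Adj w u ∧ r u < r w

section dirichlet

variable {V : Type*} [Fintype V] {G : SimpleGraph V} {z : V}

lemma deg_eq_sum (G : SimpleGraph V) (w : V) :
    (deg G w : ℝ) = ∑ u, (if G.Adj w u then (1 : ℝ) else 0) := by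
  rw [deg, Nat.card_eq_fintype_card, Fintype.card_subtype, Finset.sum_boole]

lemma deg_pos_of_adj {w u : V} (h : G.Adj w u) : 0 < (deg G w : ℝ) := by
  rw [deg, Nat.cast_pos]
  have : Nonempty {u // G.Adj w u} := ⟨⟨u, h⟩⟩
  exact Nat.card_pos

/-- Maximum principle: a function that is subharmonic off `z` is at most its value at `z`. -/
lemma max_principle (hr : HasRank G z) (f : V → ℝ)
    (hf : ∀ w, w ≠ z → 0 ≤ ∑ u, (if G.Adj w u then f u - f w else 0)) (w : V) :
    f w ≤ f z := by
  obtain ⟨r, hr⟩ := hr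
  have : Nonempty V := ⟨z⟩
  obtain ⟨m, hm⟩ := Finite.exists_max f
  -- among the maximizers of `f`, the one of least rank must be `z`
  obtain ⟨p, hp, hmin⟩ := Finset.exists_min_image
    (Finset.univ.filter fun p => f p = f m) r ⟨m, by simp⟩
  simp only [Finset.mem_filter, Finset.mem_univ, true_and] at hp hmin
  by_cases hpz : p = z
  · rw [← hpz, hp]; exact hm w
  obtain ⟨u, hu, hlt⟩ := hr p hpz
  have hle : ∀ a ∈ (Finset.univ : Finset V), (if G.Adj p a then f a - f p else 0) ≤ 0 := by
    intro a _
    split_ifs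
    · linarith [hm a]
    · exact le_rfl
  have h0 := (Finset.sum_eq_zero_iff_of_nonpos hle).1
    (le_antisymm (Finset.sum_nonpos hle) (hf p hpz)) u (Finset.mem_univ u)
  rw [if_pos hu] at h0
  exact absurd hlt (not_lt.2 (hmin u (by linarith)))

lemma IsSol.nonneg (hr : HasRank G z) {g : V → ℝ} (hg : IsSol G z g) (w : V) : 0 ≤ g w := by
  have := max_principle hr (fun w => - g w) (fun w hw => by
    have h := hg.2 w hw
    have hd : (0 : ℝ) ≤ deg G w := Nat.cast_nonneg _
    rw [deg_eq_sum] at hd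
    have : ∑ u, (if G.Adj w u then - g u - - g w else 0)
        = ∑ u, (if G.Adj w u then (1 : ℝ) else 0)
          - ∑ u, (if G.Adj w u then g u - g w + 1 else 0) := by
      rw [← Finset.sum_sub_distrib]
      refine Finset.sum_congr rfl fun u _ => ?_
      split_ifs <;> ring
    rw [this, h]; linarith) w
  simp only [hg.1] at this
  linarith

lemma killed_nonneg (G : SimpleGraph V) (z u w : V) : 0 ≤ killed G z u w := by
  simp only [killed, step, Matrix.of_apply]
  split_ifs <;> positivity

/-- Off `z`, the killed walk acts as the identity plus the normalized graph Laplacian. -/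
lemma killed_mulVec_eq (hr : HasRank G z) (f : V → ℝ) {w : V} (hw : w ≠ z) :
    (killed G z).mulVec f w
      = f w + (deg G w : ℝ)⁻¹ * ∑ u, (if G.Adj w u then f u - f w else 0) := by
  obtain ⟨r, hr⟩ := hr
  obtain ⟨u, hu, -⟩ := hr w hw
  have hd := deg_pos_of_adj hu
  have h1 : ∑ u, (if G.Adj w u then f u - f w else 0)
      = ∑ u, (if G.Adj w u then f u else 0) - deg G w * f w := by
    rw [deg_eq_sum, Finset.sum_mul, ← Finset.sum_sub_distrib]
    refine Finset.sum_congr rfl fun u _ => ?_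
    split_ifs <;> ring
  have h2 : (killed G z).mulVec f w
      = (deg G w : ℝ)⁻¹ * ∑ u, (if G.Adj w u then f u else 0) := by
    simp only [Matrix.mulVec, dotProduct, killed, step, Matrix.of_apply, if_neg hw,
      Finset.mul_sum]
    refine Finset.sum_congr rfl fun u _ => ?_
    split_ifs <;> ring
  rw [h1, h2]
  field_simp
  ring

lemma killed_mulVec_self (f : V → ℝ) : (killed G z).mulVec f z = 0 := by
  simp [Matrix.mulVec, dotProduct, killed]

lemma isSol_iff [DecidableEq V] (hr : HasRank G z) (g : V → ℝ) :
    IsSol G z g ↔ g = (fun w => if w = z then (0 : ℝ) else 1) + (killed G z).mulVec g := by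
  have key : ∀ w, w ≠ z → (∑ u, (if G.Adj w u then g u - g w + 1 else 0) = 0 ↔
      g w = 1 + (killed G z).mulVec g w) := by
    intro w hw
    obtain ⟨u, hu, -⟩ := hr.choose_spec w hw
    have hd := deg_pos_of_adj hu
    have h1 : ∑ u, (if G.Adj w u then g u - g w + 1 else 0)
        = ∑ u, (if G.Adj w u then g u - g w else 0) + deg G w := by
      rw [deg_eq_sum, ← Finset.sum_add_distrib]
      refine Finset.sum_congr rfl fun u _ => ?_
      split_ifs <;> ring
    rw [h1, killed_mulVec_eq hr g hw]
    field_simp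
    constructor <;> intro h <;> linarith
  constructor
  · rintro ⟨h0, h⟩
    funext w
    by_cases hw : w = z
    · subst hw; simp [h0, killed_mulVec_self]
    · simpa [hw] using (key w hw).1 (h w hw)
  · intro h
    refine ⟨?_, fun w hw => (key w hw).2 ?_⟩
    · have := congrFun h z
      simpa [killed_mulVec_self] using this
    · have := congrFun h w
      simpa [hw] using this

/-- By the maximum principle `1 - K` is injective, hence invertible, so the first-step equations
have a solution. -/
lemma exists_isSol (hr : HasRank G z) : ∃ g, IsSol G z g := by
  set L : (V → ℝ) →ₗ[ℝ] (V → ℝ) := LinearMap.id - (killed G z).mulVecLin with hL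
  have hLa : ∀ f, L f = f - (killed G z).mulVec f := fun f => rfl
  have hle : ∀ f : V → ℝ, L f = 0 → ∀ w, f w ≤ 0 := by
    intro f hf w
    have h0 : f z = 0 := by
      have := congrFun hf z
      simpa [hLa, killed_mulVec_self] using this
    rw [← h0]
    refine max_principle hr f (fun w hw => ?_) w
    obtain ⟨u, hu, -⟩ := hr.choose_spec w hw
    have hd := deg_pos_of_adj hu
    have h1 := congrFun hf w
    rw [hLa, Pi.sub_apply, killed_mulVec_eq hr f hw, Pi.zero_apply] at h1
    have h2 : (deg G w : ℝ)⁻¹ * ∑ u, (if G.Adj w u then f u - f w else 0) = 0 := by linarith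
    rcases mul_eq_zero.1 h2 with h | h
    · exact absurd h (inv_ne_zero hd.ne')
    · exact h.ge
  have hinj : Function.Injective L := by
    rw [← LinearMap.ker_eq_bot, LinearMap.ker_eq_bot']
    intro f hf
    funext w
    have h1 := hle f hf w
    have h2 := hle (-f) (by rw [map_neg, hf, neg_zero]) w
    simp only [Pi.neg_apply] at h2
    simp only [Pi.zero_apply]
    linarith
  obtain ⟨g, hg⟩ := LinearMap.surjective_of_injective hinj
    (fun w => if w = z then (0 : ℝ) else 1)
  refine ⟨g, (isSol_iff hr g).2 ?_⟩
  rw [← hg, hLa, sub_add_cancel]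

/-- The series defining `hit` converges to the solution of the first-step equations: its partial
sums telescope to `g - K^T g`, and `K^T g → 0`. -/
lemma hit_eq_of_isSol [DecidableEq V] (hr : HasRank G z) {g : V → ℝ} (hg : IsSol G z g) (u : V) :
    hit G u z = g u := by
  set K := killed G z with hK
  set c : V → ℝ := fun w => if w = z then (0 : ℝ) else 1 with hc
  have hgc : g = c + K.mulVec g := by
    have := (isSol_iff hr g).1 hg
    exact this
  have hKn : ∀ t a b, 0 ≤ (K ^ t) a b := by
    intro t
    induction t with
    | zero => intro a b; rw [pow_zero, Matrix.one_apply]; split_ifs <;> norm_num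
    | succ t ih =>
      intro a b
      rw [pow_succ, Matrix.mul_apply]
      exact Finset.sum_nonneg fun i _ => mul_nonneg (ih a i) (killed_nonneg G z i b)
  have hmono : ∀ t (f f' : V → ℝ), (∀ w, f w ≤ f' w) →
      (K ^ t).mulVec f u ≤ (K ^ t).mulVec f' u := fun t f f' h =>
    Finset.sum_le_sum fun w _ => mul_le_mul_of_nonneg_left (h w) (hKn t u w)
  have hcn : ∀ w, 0 ≤ c w := fun w => by simp only [hc]; split_ifs <;> norm_num
  have hpos : ∀ t (f : V → ℝ), (∀ w, 0 ≤ f w) → 0 ≤ (K ^ t).mulVec f u := fun t f h =>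
    Finset.sum_nonneg fun w _ => mul_nonneg (hKn t u w) (h w)
  set a : ℕ → ℝ := fun t => (K ^ t).mulVec c u with ha
  have hpart : ∀ T, ∑ t ∈ Finset.range T, a t = g u - (K ^ T).mulVec g u := by
    intro T
    induction T with
    | zero => simp
    | succ T ih =>
      have h1 : (K ^ T).mulVec g u = a T + (K ^ (T + 1)).mulVec g u := by
        conv_lhs => rw [hgc]
        rw [Matrix.mulVec_add, Matrix.mulVec_mulVec, ← pow_succ]
        rfl
      rw [Finset.sum_range_succ, ih, h1]
      ring
  have hsum : Summable a := summable_of_sum_range_le (c := g u)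
    (fun t => hpos t c hcn) (fun T => by
      rw [hpart]; linarith [hpos T g (hg.nonneg hr)])
  have : Nonempty V := ⟨z⟩
  obtain ⟨m, hm⟩ := Finite.exists_max g
  have hgle : ∀ w, g w ≤ (g m • c) w := by
    intro w
    by_cases hw : w = z
    · simp [hw, hc, hg.1]
    · simp [hw, hc, hm w]
  have hlim : Filter.Tendsto (fun T => (K ^ T).mulVec g u) Filter.atTop (nhds 0) := by
    have h2 : Filter.Tendsto (fun T => g m * a T) Filter.atTop (nhds 0) := by
      simpa using hsum.tendsto_atTop_zero.const_mul (g m)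
    refine squeeze_zero (fun T => hpos T g (hg.nonneg hr)) (fun T => ?_) h2
    have := hmono T g _ hgle
    rwa [Matrix.mulVec_smul, Pi.smul_apply, smul_eq_mul] at this
  have h3 : Filter.Tendsto (fun T => ∑ t ∈ Finset.range T, a t) Filter.atTop (nhds (g u)) := by
    simp only [hpart]
    simpa using tendsto_const_nhds.sub hlim
  exact tendsto_nhds_unique hsum.hasSum.tendsto_sum_nat h3

end dirichlet

/-! ### Distances in trees -/

section trees

variable {V : Type*} {G : SimpleGraph V}

lemma exists_adj_closer (hG : G.IsTree) {w b : V} (h : w ≠ b) :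
    ∃ u, G.Adj w u ∧ G.dist w b = G.dist u b + 1 := by
  obtain ⟨p, hp⟩ := hG.connected.exists_walk_length_eq_dist w b
  cases p with
  | nil => exact absurd rfl h
  | cons hadj p =>
    rename_i u
    refine ⟨u, hadj, ?_⟩
    have h1 := SimpleGraph.dist_le p
    have h2 := hG.dist_eq_dist_add_one_of_adj b hadj
    rw [SimpleGraph.dist_comm (u := b), SimpleGraph.dist_comm (u := b)] at h2
    rw [SimpleGraph.Walk.length_cons] at hp
    omega

lemma closer_unique (hG : G.IsTree) {w b u u' : V} (hu : G.Adj w u) (hu' : G.Adj w u')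
    (h : G.dist w b = G.dist u b + 1) (h' : G.dist w b = G.dist u' b + 1) : u = u' := by
  obtain ⟨p, hp⟩ := hG.connected.exists_walk_length_eq_dist u b
  obtain ⟨p', hp'⟩ := hG.connected.exists_walk_length_eq_dist u' b
  have h1 := (SimpleGraph.Walk.cons hu p).isPath_of_length_eq_dist (by simp [hp, h])
  have h2 := (SimpleGraph.Walk.cons hu' p').isPath_of_length_eq_dist (by simp [hp', h'])
  have := congrArg SimpleGraph.Walk.snd ((hG.existsUnique_path w b).unique h1 h2)
  simpa using this

lemma dist_adj_cases (hG : G.IsTree) (b : V) {w u : V} (h : G.Adj w u) :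
    G.dist w b = G.dist u b + 1 ∨ G.dist u b = G.dist w b + 1 := by
  have := hG.dist_eq_dist_add_one_of_adj b h
  rwa [SimpleGraph.dist_comm (u := b), SimpleGraph.dist_comm (u := b)] at this

/-- Distance to `b` increases by one along every edge out of `w`, except for the single edge
towards `b`, where it decreases by one. -/
lemma sum_dist (hG : G.IsTree) [Fintype V] (b w : V) :
    ∑ u, (if G.Adj w u then (G.dist u b : ℝ) - G.dist w b - 1 else 0)
      = if w = b then 0 else -2 := by
  split_ifs with h
  · subst h
    refine Finset.sum_eq_zero fun u _ => ?_
    split_ifs with hu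
    · have := SimpleGraph.dist_eq_one_iff_adj.2 hu.symm
      simp [this]
    · rfl
  · obtain ⟨u, hu, hd⟩ := exists_adj_closer hG h
    rw [Finset.sum_eq_single u]
    · rw [if_pos hu, hd]; push_cast; ring
    · intro u' _ hne
      split_ifs with hu'
      · rcases dist_adj_cases hG b hu' with h1 | h1
        · exact absurd (closer_unique hG hu' hu h1 hd) hne
        · rw [h1]; push_cast; ring
      · rfl
    · simp

lemma hasRank_of_isTree (hG : G.IsTree) (z : V) : HasRank G z :=
  ⟨fun w => G.dist w z, fun w hw => by
    obtain ⟨u, hu, hd⟩ := exists_adj_closer hG hw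
    exact ⟨u, hu, by simp only; omega⟩⟩

/-- Along a non-backtracking walk in a tree, once the distance to `x` does not decrease at the
first step, it increases at every step; so the walk is a continuation of a geodesic from `x`. -/
lemma dist_along (hG : G.IsTree) (x : V) (q : ℕ → V) (m : ℕ)
    (hadj : ∀ i < m, G.Adj (q i) (q (i + 1))) (hne : ∀ i, i + 2 ≤ m → q i ≠ q (i + 2))
    (h0 : 1 ≤ m → G.dist (q 0) x ≤ G.dist (q 1) x) :
    G.dist (q m) (q 0) + G.dist x (q 0) = G.dist (q m) x := by
  have hstep : ∀ i < m, G.dist (q (i + 1)) x = G.dist (q i) x + 1 := by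
    intro i
    induction i with
    | zero =>
      intro hi
      rcases dist_adj_cases hG x (hadj 0 hi) with h | h
      · have := h0 hi; simp only [zero_add] at h; omega
      · exact h
    | succ i ih =>
      intro hi
      have h1 := ih (by omega)
      rcases dist_adj_cases hG x (hadj (i + 1) hi) with h | h
      · exact absurd (closer_unique hG (hadj i (by omega)).symm (hadj (i + 1) hi) h1 h)
          (hne i (by omega))
      · exact h
  have hall : ∀ i ≤ m, G.dist (q i) x = G.dist (q 0) x + i ∧ G.dist (q i) (q 0) ≤ i := by
    intro i
    induction i with
    | zero => simp
    | succ i ih =>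
      intro hi
      have h1 := ih (by omega)
      have h2 := hstep i (by omega)
      have h3 := hG.connected.dist_triangle (u := q (i + 1)) (v := q i) (w := q 0)
      have h4 := SimpleGraph.dist_eq_one_iff_adj.2 (hadj i (by omega)).symm
      omega
  have h1 := hall m le_rfl
  have h2 := hG.connected.dist_triangle (u := q m) (v := q 0) (w := x)
  rw [SimpleGraph.dist_comm (u := x)]
  omega

/-- If `k` minimizes the distance from `x` among the vertices of a path, then every geodesic from
`x` to the path passes through `v k`. -/
lemma gate (hG : G.IsTree) {s : ℕ} (v : Fin (s + 1) → V) (hinj : Function.Injective v)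
    (hadj : ∀ i : ℕ, ∀ h : i < s, G.Adj (v ⟨i, by omega⟩) (v ⟨i + 1, by omega⟩))
    (x : V) (k : Fin (s + 1)) (hk : ∀ i, G.dist (v k) x ≤ G.dist (v i) x) (i : Fin (s + 1)) :
    G.dist (v i) (v k) + G.dist x (v k) = G.dist (v i) x := by
  obtain ⟨k, hks⟩ := k
  obtain ⟨i, his⟩ := i
  rcases le_total k i with h | h
  · obtain ⟨m, rfl⟩ := Nat.exists_eq_add_of_le h
    have := dist_along hG x (fun t => if ht : k + t < s + 1 then v ⟨k + t, ht⟩ else v 0) m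
      (fun t ht => by
        rw [dif_pos (by omega), dif_pos (by omega)]
        exact hadj (k + t) (by omega))
      (fun t ht => by
        rw [dif_pos (by omega), dif_pos (by omega)]
        intro he
        have := hinj he
        simp only [Fin.mk.injEq] at this
        omega)
      (fun hm => by
        rw [dif_pos (by omega), dif_pos (by omega)]
        exact hk _)
    simpa only [add_zero, dif_pos his, dif_pos hks] using this
  · obtain ⟨m, rfl⟩ := Nat.exists_eq_add_of_le h
    have := dist_along hG x (fun t => v ⟨i + m - t, by omega⟩) m
      (fun t ht => by
        have h1 := (hadj (i + m - (t + 1)) (by omega)).symm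
        have h2 : i + m - (t + 1) + 1 = i + m - t := by omega
        simpa only [h2] using h1)
      (fun t ht he => by
        have := hinj he
        simp only [Fin.mk.injEq] at this
        omega)
      (fun hm => hk _)
    simpa only [Nat.add_sub_cancel, Nat.sub_zero] using this

/-- If `b` lies on the geodesic from `x ≠ b` to `z`, then hitting `z` takes strictly longer from
`x` than from `b`: on the branch hanging off `b` away from `z`, the solution of the first-step
equations has no local minimum other than `b`. -/
lemma isSol_lt_of_gate [Fintype V] (hG : G.IsTree) {x b z : V} (hxb : x ≠ b)
    (hgate : G.dist z b + G.dist x b = G.dist z x) {g : V → ℝ} (hg : IsSol G z g) :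
    g b < g x := by
  set B := Finset.univ.filter fun w => G.dist w z = G.dist w b + G.dist b z with hB
  have hmem : ∀ w, w ∈ B ↔ G.dist w z = G.dist w b + G.dist b z := by simp [hB]
  have hxB : x ∈ B := by
    rw [hmem, SimpleGraph.dist_comm (u := x) (v := z), SimpleGraph.dist_comm (u := b) (v := z)]
    omega
  have hclosed : ∀ w ∈ B, w ≠ b → ∀ u, G.Adj w u → u ∈ B := by
    intro w hw hwb u hu
    rw [hmem] at hw ⊢
    have t1 := hG.connected.dist_triangle (u := u) (v := b) (w := z)
    rcases dist_adj_cases hG b hu with h1 | h1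
    · rcases dist_adj_cases hG z hu with h2 | h2 <;> omega
    · rcases dist_adj_cases hG z hu with h2 | h2
      · -- the neighbour towards `b` is also the neighbour towards `z`
        obtain ⟨u', hu', h3⟩ := exists_adj_closer hG hwb
        have t2 := hG.connected.dist_triangle (u := u') (v := b) (w := z)
        rcases dist_adj_cases hG z hu' with h4 | h4
        · have := closer_unique hG hu hu' h2 h4
          subst this
          omega
        · omega
      · omega
  have hstrict : ∀ w ∈ B, w ≠ b → ∃ u ∈ B, g u < g w := by
    intro w hw hwb
    have hwz : w ≠ z := by
      rintro rfl
      have h1 := (hmem _).1 hw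
      rw [SimpleGraph.dist_self] at h1
      have h2 := hG.connected.pos_dist_of_ne hwb
      omega
    by_contra! hcon
    obtain ⟨u, hu, -⟩ := exists_adj_closer hG hwb
    have hnn : ∀ a ∈ (Finset.univ : Finset V),
        0 ≤ (if G.Adj w a then g a - g w + 1 else 0) := by
      intro a _
      split_ifs with ha
      · linarith [hcon a (hclosed w hw hwb a ha)]
      · exact le_rfl
    have h0 := (Finset.sum_eq_zero_iff_of_nonneg hnn).1 (hg.2 w hwz) u (Finset.mem_univ u)
    rw [if_pos hu] at h0
    linarith [hcon u (hclosed w hw hwb u hu)]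
  obtain ⟨p, hp, hmin⟩ := Finset.exists_min_image B g ⟨x, hxB⟩
  have hpb : p = b := by
    by_contra hne
    obtain ⟨u, hu, hlt⟩ := hstrict p hp hne
    exact absurd hlt (not_lt.2 (hmin u hu))
  subst hpb
  obtain ⟨u, hu, hlt⟩ := hstrict x hxB hxb
  exact (hmin u hu).trans_lt hlt

end trees

/-! ### Moving a leaf -/

section move

variable {V : Type*} {G : SimpleGraph V}

lemma leaf_adj_unique {x y : V} (hy : IsLeaf G y) (hx : G.Adj x y) {u : V} (hu : G.Adj y u) :
    u = x := by
  rw [IsLeaf, deg, Nat.card_eq_one_iff_unique] at hy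
  have := hy.1.elim (⟨u, hu⟩ : {w // G.Adj y w}) ⟨x, hx.symm⟩
  exact congrArg Subtype.val this

lemma leaf_dist (hG : G.IsTree) {x y : V} (hy : IsLeaf G y) (hx : G.Adj x y) {w : V}
    (hw : w ≠ y) : G.dist y w = G.dist x w + 1 := by
  obtain ⟨u, hu, hd⟩ := exists_adj_closer hG hw.symm
  rwa [leaf_adj_unique hy hx hu] at hd

lemma moveLeaf_adj {x y b : V} (hby : b ≠ y) (w u : V) :
    (moveLeaf G x y b).Adj w u ↔
      (G.Adj w u ∧ ¬ (w = x ∧ u = y) ∧ ¬ (w = y ∧ u = x)) ∨ (w = b ∧ u = y) ∨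
        (w = y ∧ u = b) := by
  simp only [moveLeaf, SimpleGraph.fromEdgeSet_adj, Set.mem_union, Set.mem_sdiff,
    SimpleGraph.mem_edgeSet, Set.mem_singleton_iff, Sym2.eq_iff]
  constructor
  · rintro ⟨h, -⟩; tauto
  · intro h
    refine ⟨by tauto, ?_⟩
    rcases h with h | ⟨rfl, rfl⟩ | ⟨rfl, rfl⟩
    · exact h.1.ne
    · exact hby
    · exact hby.symm

lemma hasRank_moveLeaf (hG : G.IsTree) {x y b : V} (hy : IsLeaf G y) (hx : G.Adj x y)
    (hby : b ≠ y) {z : V} (hzy : z ≠ y) : HasRank (moveLeaf G x y b) z := by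
  refine ⟨fun w => if w = y then G.dist b z + 1 else G.dist w z, fun w hw => ?_⟩
  by_cases hwy : w = y
  · exact ⟨b, (moveLeaf_adj hby w b).2 (Or.inr (Or.inr ⟨hwy, rfl⟩)), by simp [hwy, hby]⟩
  · obtain ⟨u, hu, hd⟩ := exists_adj_closer hG hw
    have huy : u ≠ y := by
      rintro rfl
      have := leaf_adj_unique hy hx hu.symm
      subst this
      have := leaf_dist hG hy hx hzy
      omega
    refine ⟨u, (moveLeaf_adj hby w u).2 (Or.inl ⟨hu, by tauto, by tauto⟩), ?_⟩
    simp only [if_neg hwy, if_neg huy]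
    omega

/-- The solution of the first-step equations after the move. Off `y`, the hitting time drops by
`d(w,b) + d(x,b) - d(w,x)`, twice the number of edges of the geodesic from `x` to `b` that the
geodesic from `w` to `b` uses. -/
lemma isSol_moveLeaf [Fintype V] (hG : G.IsTree) {x y b z : V} (hy : IsLeaf G y)
    (hx : G.Adj x y) (hby : b ≠ y) (hzy : z ≠ y) (hxb : x ≠ b)
    (hgate : G.dist z b + G.dist x b = G.dist z x) {h : V → ℝ} (hh : IsSol G z h) :
    IsSol (moveLeaf G x y b) z (fun w => if w = y then h b + 1 else
      h w - (G.dist w b + G.dist x b - G.dist w x)) := by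
  set ρ : V → ℝ := fun w => G.dist w b + G.dist x b - G.dist w x with hρ
  have hgate' : (G.dist z b : ℝ) + G.dist x b = G.dist z x := by exact_mod_cast hgate
  have hρb : ρ b = 0 := by
    simp [hρ, SimpleGraph.dist_comm (u := x) (v := b)]
  have hρyx : ρ y = ρ x := by
    have h1 := leaf_dist hG hy hx hby
    have h2 : G.dist y x = 1 := SimpleGraph.dist_eq_one_iff_adj.2 hx.symm
    simp only [hρ, h1, h2, SimpleGraph.dist_self]
    push_cast; ring
  have hyx : y ≠ x := hx.ne'
  have hadjy : ∀ u, G.Adj y u ↔ u = x := fun u =>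
    ⟨fun hu => leaf_adj_unique hy hx hu, fun hu => hu ▸ hx.symm⟩
  have hhy : h y = h x + 1 := by
    have := hh.2 y hzy.symm
    simp only [hadjy, Finset.sum_ite_eq', Finset.mem_univ, if_true] at this
    linarith
  refine ⟨by simp only [if_neg hzy, hh.1]; linarith, fun w hwz => ?_⟩
  by_cases hwy : w = y
  · subst hwy
    have hA : ∀ u, (moveLeaf G x w b).Adj w u ↔ u = b := by
      intro u
      rw [moveLeaf_adj hby, hadjy]
      constructor
      · rintro (h1 | h1 | h1)
        · tauto
        · exact absurd h1.1.symm hby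
        · exact h1.2
      · tauto
    simp only [hA, Finset.sum_ite_eq', Finset.mem_univ, if_true, if_neg hby]
    have : ρ b = 0 := hρb
    simp only [hρ] at this
    linarith
  · have hlap : ∑ u, (if G.Adj w u then ρ u - ρ w else 0)
        = (if w = b then 0 else -2) - (if w = x then 0 else -2) := by
      rw [← sum_dist hG b w, ← sum_dist hG x w, ← Finset.sum_sub_distrib]
      refine Finset.sum_congr rfl fun u _ => ?_
      simp only [hρ]
      split_ifs <;> ring
    -- only the edges at `y` differ: `{x,y}` contributed `2` and `{b,y}` contributes `2`
    have hterm : ∀ u, (if (moveLeaf G x y b).Adj w u then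
        (if u = y then h b + 1 else h u - ρ u) - (h w - ρ w) + 1 else 0)
        = (if G.Adj w u then h u - h w + 1 else 0) - (if G.Adj w u then ρ u - ρ w else 0)
          + (if u = y then (if w = b then 2 else 0) - (if w = x then 2 else 0) else 0) := by
      intro u
      by_cases huy : u = y
      · subst huy
        have hGa : G.Adj w u ↔ w = x := by rw [G.adj_comm, hadjy]
        have hGa' : (moveLeaf G x u b).Adj w u ↔ w = b := by
          rw [moveLeaf_adj hby, hGa]; tauto
        simp only [hGa, hGa', if_true]
        by_cases hwb : w = b
        · subst hwb
          simp only [if_true, if_neg hxb.symm, hρb]; ring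
        · by_cases hwx : w = x
          · subst hwx
            simp only [if_true, if_neg hwb, hhy, hρyx]; ring
          · simp only [if_neg hwb, if_neg hwx]; ring
      · have hGa : (moveLeaf G x y b).Adj w u ↔ G.Adj w u := by
          rw [moveLeaf_adj hby]; tauto
        simp only [hGa, if_neg huy]
        split_ifs <;> ring
    simp only [if_neg hwy]
    rw [Finset.sum_congr rfl fun u _ => hterm u, Finset.sum_add_distrib,
      Finset.sum_sub_distrib, hh.2 w hwz, hlap, Finset.sum_ite_eq' Finset.univ y,
      if_pos (Finset.mem_univ y)]
    split_ifs <;> norm_num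

end move

/-- the surgery `σ(G,P;y)` (moving the leaf `y` to the closest vertex
`v k` of the leaf-to-leaf path `P`) preserves hitting times between vertices of `P`,
does not increase hitting times to vertices of `P`, and strictly decreases the hitting
times from `y` to vertices of `P`. -/
theorem stmt11 (n d s : ℕ) {V : Type*} [Fintype V] [DecidableEq V]
    (G : SimpleGraph V) (htree : G.IsTree) (hcard : Fintype.card V = n)
    (hdiam : G.diam = d) (hncat : ¬ IsCaterpillar G)
    (v : Fin (s+1) → V) (hpath : IsLeafPath G s v) (hs : s ≤ d)
    (y : V) (hyleaf : IsLeaf G y) (hyP : ∀ i, y ≠ v i) (hynadj : ∀ i, ¬ G.Adj y (v i))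
    (x : V) (hx : G.Adj x y)
    (k : Fin (s+1)) (hk : ∀ i, G.dist y (v k) ≤ G.dist y (v i))
    (G' : SimpleGraph V) (hG' : G' = moveLeaf G x y (v k)) :
    (∀ i j : Fin (s+1), hit G' (v i) (v j) = hit G (v i) (v j)) ∧
    (∀ j : Fin (s+1),
      (∀ w : V, hit G' w (v j) ≤ hit G w (v j)) ∧
      hit G' y (v j) < hit G y (v j)) := by
  obtain ⟨hinj, hadj, -, -⟩ := hpath
  have hby : v k ≠ y := (hyP k).symm
  have hxb : x ≠ v k := by
    rintro rfl
    exact hynadj k hx.symm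
  have hkx : ∀ i, G.dist (v k) x ≤ G.dist (v i) x := by
    intro i
    have h1 := hk i
    rw [leaf_dist htree hyleaf hx hby, leaf_dist htree hyleaf hx (hyP i).symm,
      SimpleGraph.dist_comm (u := x), SimpleGraph.dist_comm (u := x)] at h1
    omega
  have hgate := gate htree v hinj hadj x k hkx
  have key : ∀ j : Fin (s+1), hit G y (v j) = hit G x (v j) + 1 ∧
      hit G (v k) (v j) < hit G x (v j) ∧
      ∀ w, hit G' w (v j) = if w = y then hit G (v k) (v j) + 1 else
        hit G w (v j) - (G.dist w (v k) + G.dist x (v k) - G.dist w x) := by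
    intro j
    have hr := hasRank_of_isTree htree (v j)
    obtain ⟨h, hh⟩ := exists_isSol hr
    have hyj : y ≠ v j := hyP j
    simp only [hit_eq_of_isSol hr hh]
    refine ⟨?_, isSol_lt_of_gate htree hxb (hgate j) hh, fun w => ?_⟩
    · have h1 := hh.2 y hyj
      rw [Finset.sum_eq_single x] at h1
      · rw [if_pos hx.symm] at h1; linarith
      · intro u _ hu
        exact if_neg fun h2 => hu (leaf_adj_unique hyleaf hx h2)
      · simp
    · rw [hG', hit_eq_of_isSol (hasRank_moveLeaf htree hyleaf hx hby hyj.symm)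
        (isSol_moveLeaf htree hyleaf hx hby hyj.symm hxb (hgate j) hh)]
      split_ifs <;> rfl
  refine ⟨fun i j => ?_, fun j => ?_⟩
  · rw [(key j).2.2, if_neg (hyP i).symm, ← hgate i]
    push_cast
    ring
  · obtain ⟨h1, h2, h3⟩ := key j
    have hlt : hit G' y (v j) < hit G y (v j) := by
      rw [h3, if_pos rfl, h1]; linarith
    refine ⟨fun w => ?_, hlt⟩
    by_cases hw : w = y
    · rw [hw]; exact hlt.le
    · rw [h3, if_neg hw]
      have h4 : G.dist w x ≤ G.dist w (v k) + G.dist x (v k) := by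
        rw [SimpleGraph.dist_comm (u := x)]
        exact htree.connected.dist_triangle
      have h5 : (G.dist w x : ℝ) ≤ G.dist w (v k) + G.dist x (v k) := by exact_mod_cast h4
      linarith

end RWMix
end
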